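/- Let N ≥ 3 be an integer and let σ > N−2 be a real number. Then there exists a constant C > 0 such that for every y ∈ ℝ^N, ∫_{ℝ^N} |y−z|^{−(N−2)} · (1+|z|)^{−(2+σ)} dz ≤ C·(1+|y|)^{−(N−2)}. -/

import Mathlib

open MeasureTheory

/-!
If `‖y - z‖ ≤ 1 + ‖z‖`, then `1 + ‖z‖` dominates both `(1 + ‖y‖) / 2` and `(1 + ‖y - z‖) / 2`;
otherwise `‖y - z‖` dominates `(1 + ‖y‖) / 2`. So `(1 + ‖y‖) ^ (-a)` can be split off the factor
`(1 + ‖z‖) ^ (-b)` in the first case, and off the kernel `‖y - z‖ ^ (-a)` in the second. What is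
left is at most a constant times `k (y - z) + (1 + ‖z‖) ^ (-b)` with
`k x = ‖x‖ ^ (-a) * (1 + ‖x‖) ^ (-(b - a))`. For `a < dim E < b` both functions are integrable, and
by translation invariance the integral of the sum does not depend on `y`.
-/

section Pointwise

theorem rpow_neg_le_rpow_mul_rpow_neg {a c u v : ℝ} (ha : 0 ≤ a) (hc : 0 < c) (hu : 0 < u)
    (huv : u ≤ c * v) : v ^ (-a) ≤ c ^ a * u ^ (-a) := by
  have hv : 0 < v := pos_of_mul_pos_right (hu.trans_le huv) hc.le
  calc v ^ (-a) = c ^ a * (c * v) ^ (-a) := by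
        rw [Real.mul_rpow hc.le hv.le, ← mul_assoc, ← Real.rpow_add hc, add_neg_cancel,
          Real.rpow_zero, one_mul]
    _ ≤ c ^ a * u ^ (-a) := by
        gcongr ?_ * ?_
        exact Real.rpow_le_rpow_of_nonpos hu huv (neg_nonpos.mpr ha)

variable {F : Type*} [SeminormedAddCommGroup F] {a b : ℝ} {y z : F}

theorem one_add_norm_rpow_le_of_norm_sub_le (ha : 0 ≤ a) (hab : a ≤ b)
    (hyz : ‖y - z‖ ≤ 1 + ‖z‖) :
    (1 + ‖z‖) ^ (-b) ≤ 2 ^ b * (1 + ‖y‖) ^ (-a) * (1 + ‖y - z‖) ^ (-(b - a)) := by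
  have hy : 1 + ‖y‖ ≤ 2 * (1 + ‖z‖) := by linarith [norm_le_norm_add_norm_sub' y z]
  have hsub : 1 + ‖y - z‖ ≤ 2 * (1 + ‖z‖) := by linarith [norm_nonneg z]
  calc (1 + ‖z‖) ^ (-b) = (1 + ‖z‖) ^ (-a) * (1 + ‖z‖) ^ (-(b - a)) := by
        rw [← Real.rpow_add (by positivity)]
        ring_nf
    _ ≤ (2 ^ a * (1 + ‖y‖) ^ (-a)) * (2 ^ (b - a) * (1 + ‖y - z‖) ^ (-(b - a))) := by
        gcongr ?_ * ?_
        · exact rpow_neg_le_rpow_mul_rpow_neg ha two_pos (by positivity) hy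
        · exact rpow_neg_le_rpow_mul_rpow_neg (sub_nonneg.mpr hab) two_pos (by positivity) hsub
    _ = 2 ^ b * (1 + ‖y‖) ^ (-a) * (1 + ‖y - z‖) ^ (-(b - a)) := by
        rw [mul_mul_mul_comm, ← Real.rpow_add two_pos, add_sub_cancel, mul_assoc]

theorem norm_sub_rpow_le_of_one_add_norm_le (ha : 0 ≤ a) (hyz : 1 + ‖z‖ ≤ ‖y - z‖) :
    ‖y - z‖ ^ (-a) ≤ 2 ^ a * (1 + ‖y‖) ^ (-a) :=
  rpow_neg_le_rpow_mul_rpow_neg ha two_pos (by positivity)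
    (by linarith [norm_le_norm_add_norm_sub' y z])

theorem norm_sub_rpow_mul_one_add_norm_rpow_le (ha : 0 ≤ a) (hab : a ≤ b) (y z : F) :
    ‖y - z‖ ^ (-a) * (1 + ‖z‖) ^ (-b) ≤
      2 ^ b * (1 + ‖y‖) ^ (-a) *
        (‖y - z‖ ^ (-a) * (1 + ‖y - z‖) ^ (-(b - a)) + (1 + ‖z‖) ^ (-b)) := by
  rcases le_total ‖y - z‖ (1 + ‖z‖) with near | far
  · calc ‖y - z‖ ^ (-a) * (1 + ‖z‖) ^ (-b)
        ≤ ‖y - z‖ ^ (-a) * (2 ^ b * (1 + ‖y‖) ^ (-a) * (1 + ‖y - z‖) ^ (-(b - a))) := by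
          gcongr
          exact one_add_norm_rpow_le_of_norm_sub_le ha hab near
      _ = 2 ^ b * (1 + ‖y‖) ^ (-a) * (‖y - z‖ ^ (-a) * (1 + ‖y - z‖) ^ (-(b - a))) :=
          mul_left_comm _ _ _
      _ ≤ _ := by
          gcongr
          exact le_add_of_nonneg_right (by positivity)
  · calc ‖y - z‖ ^ (-a) * (1 + ‖z‖) ^ (-b)
        ≤ 2 ^ a * (1 + ‖y‖) ^ (-a) * (1 + ‖z‖) ^ (-b) := by
          gcongr
          exact norm_sub_rpow_le_of_one_add_norm_le ha far
      _ ≤ 2 ^ b * (1 + ‖y‖) ^ (-a) * (1 + ‖z‖) ^ (-b) := by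
          gcongr
          exact one_le_two
      _ ≤ _ := by
          gcongr
          exact le_add_of_nonneg_left (by positivity)

end Pointwise

section Integral

open Asymptotics Filter Module Set Topology

theorem integrableOn_rpow_mul_one_add_rpow_Ioi {s c : ℝ} (hs : 0 < s) (hsc : s < c) :
    IntegrableOn (fun t : ℝ ↦ t ^ (s - 1) * (1 + t) ^ (-c)) (Ioi 0) := by
  have hcont : ContinuousOn (fun t : ℝ ↦ (1 + t) ^ (-c)) (Ici 0) := fun t (ht : 0 ≤ t) ↦
    (ContinuousAt.rpow_const (by fun_prop) (Or.inl (by positivity))).continuousWithinAt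
  have hzero : (fun t : ℝ ↦ (1 + t) ^ (-c)) =O[𝓝[>] 0] (fun t : ℝ ↦ t ^ (-(0 : ℝ))) := by
    simp only [neg_zero, Real.rpow_zero]
    exact ((hcont 0 self_mem_Ici).mono Ioi_subset_Ici_self).isBigO_one ℝ
  have htop : (fun t : ℝ ↦ (1 + t) ^ (-c)) =O[atTop] (fun t : ℝ ↦ t ^ (-c)) := by
    refine IsBigO.of_norm_eventuallyLE ?_
    filter_upwards [eventually_gt_atTop 0] with t ht
    rw [Real.norm_of_nonneg (by positivity)]
    exact Real.rpow_le_rpow_of_nonpos ht (by linarith) (by linarith)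
  exact mellin_convergent_of_isBigO_scalar
    ((hcont.mono Ioi_subset_Ici_self).locallyIntegrableOn measurableSet_Ioi) htop hsc hzero hs

variable {E : Type*} [NormedAddCommGroup E] [NormedSpace ℝ E] [FiniteDimensional ℝ E]
  [MeasurableSpace E] [BorelSpace E] (μ : Measure E) [μ.IsAddHaarMeasure] {a b : ℝ}

theorem integrable_norm_rpow_mul_one_add_norm_rpow {c : ℝ}
    (ha : a < finrank ℝ E) (hac : finrank ℝ E < a + c) :
    Integrable (fun x : E ↦ ‖x‖ ^ (-a) * (1 + ‖x‖) ^ (-c)) μ := by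
  cases subsingleton_or_nontrivial E
  · exact .of_finite
  rw [integrable_fun_norm_addHaar μ (f := fun r : ℝ ↦ r ^ (-a) * (1 + r) ^ (-c))]
  refine (integrableOn_rpow_mul_one_add_rpow_Ioi (sub_pos.mpr ha)
    (sub_lt_iff_lt_add'.mpr hac)).congr_fun (fun r (hr : 0 < r) ↦ ?_) measurableSet_Ioi
  rw [smul_eq_mul, ← mul_assoc, ← Real.rpow_natCast, ← Real.rpow_add hr,
    Nat.cast_pred finrank_pos]
  ring_nf

theorem integrable_norm_sub_rpow_mul_one_add_norm_rpow (ha₀ : 0 ≤ a) (ha : a < finrank ℝ E)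
    (hb : finrank ℝ E < b) (y : E) :
    Integrable (fun z : E ↦ ‖y - z‖ ^ (-a) * (1 + ‖z‖) ^ (-b)) μ := by
  have hk : Integrable (fun x : E ↦ ‖x‖ ^ (-a) * (1 + ‖x‖) ^ (-(b - a))) μ :=
    integrable_norm_rpow_mul_one_add_norm_rpow μ ha (by rwa [add_sub_cancel])
  refine (((hk.comp_sub_left y).add (integrable_one_add_norm hb)).const_mul
    (2 ^ b * (1 + ‖y‖) ^ (-a))).mono' (by fun_prop) (.of_forall fun z ↦ ?_)
  rw [Real.norm_of_nonneg (by positivity)]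
  exact norm_sub_rpow_mul_one_add_norm_rpow_le ha₀ (ha.trans hb).le y z

theorem integral_norm_sub_rpow_mul_one_add_norm_rpow_le (ha₀ : 0 ≤ a) (ha : a < finrank ℝ E)
    (hb : finrank ℝ E < b) (y : E) :
    ∫ z, ‖y - z‖ ^ (-a) * (1 + ‖z‖) ^ (-b) ∂μ ≤
      2 ^ b * (1 + ‖y‖) ^ (-a) *
        (∫ x, ‖x‖ ^ (-a) * (1 + ‖x‖) ^ (-(b - a)) ∂μ + ∫ x, (1 + ‖x‖) ^ (-b) ∂μ) := by
  let k : E → ℝ := fun x ↦ ‖x‖ ^ (-a) * (1 + ‖x‖) ^ (-(b - a))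
  have hk : Integrable (fun z ↦ k (y - z)) μ :=
    (integrable_norm_rpow_mul_one_add_norm_rpow μ ha (by rwa [add_sub_cancel])).comp_sub_left y
  have hw : Integrable (fun z : E ↦ (1 + ‖z‖) ^ (-b)) μ := integrable_one_add_norm hb
  calc ∫ z, ‖y - z‖ ^ (-a) * (1 + ‖z‖) ^ (-b) ∂μ
      ≤ ∫ z, 2 ^ b * (1 + ‖y‖) ^ (-a) * (k (y - z) + (1 + ‖z‖) ^ (-b)) ∂μ :=
        integral_mono (integrable_norm_sub_rpow_mul_one_add_norm_rpow μ ha₀ ha hb y)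
          ((hk.add hw).const_mul _)
          (norm_sub_rpow_mul_one_add_norm_rpow_le ha₀ (ha.trans hb).le y)
    _ = 2 ^ b * (1 + ‖y‖) ^ (-a) * (∫ x, k x ∂μ + ∫ x, (1 + ‖x‖) ^ (-b) ∂μ) := by
        rw [integral_const_mul, integral_add hk hw, integral_sub_left_eq_self k μ y]

theorem kernel_convolution_estimate_large_general (ha₀ : 0 ≤ a) (ha : a < finrank ℝ E)
    (hb : finrank ℝ E < b) :
    ∃ C > 0, ∀ y : E,
      Integrable (fun z : E ↦ ‖y - z‖ ^ (-a) * (1 + ‖z‖) ^ (-b)) μ ∧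
        ∫ z, ‖y - z‖ ^ (-a) * (1 + ‖z‖) ^ (-b) ∂μ ≤ C * (1 + ‖y‖) ^ (-a) := by
  let K : ℝ := ∫ x, ‖x‖ ^ (-a) * (1 + ‖x‖) ^ (-(b - a)) ∂μ + ∫ x, (1 + ‖x‖) ^ (-b) ∂μ
  have hK : 0 ≤ K := by positivity
  refine ⟨2 ^ b * (K + 1), mul_pos (by positivity) (add_pos_of_nonneg_of_pos hK one_pos), fun y ↦
    ⟨integrable_norm_sub_rpow_mul_one_add_norm_rpow μ ha₀ ha hb y, ?_⟩⟩
  calc ∫ z, ‖y - z‖ ^ (-a) * (1 + ‖z‖) ^ (-b) ∂μ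
      ≤ 2 ^ b * (1 + ‖y‖) ^ (-a) * K :=
        integral_norm_sub_rpow_mul_one_add_norm_rpow_le μ ha₀ ha hb y
    _ = 2 ^ b * K * (1 + ‖y‖) ^ (-a) := mul_right_comm _ _ _
    _ ≤ 2 ^ b * (K + 1) * (1 + ‖y‖) ^ (-a) := by
        gcongr
        exact le_add_of_nonneg_right zero_le_one

end Integral

/-- Second case of Lemma B.3 of the paper: an estimate for the Newtonian-kernel
convolution of a polynomially decaying weight, for `σ > N - 2`. -/
theorem kernel_convolution_estimate_large (N : ℕ) (hN : 3 ≤ N) (σ : ℝ)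
    (hσ : (N : ℝ) - 2 < σ) :
    ∃ C > 0, ∀ y : EuclideanSpace ℝ (Fin N),
      ∫ z : EuclideanSpace ℝ (Fin N),
          ‖y - z‖ ^ (-((N : ℝ) - 2)) * (1 + ‖z‖) ^ (-(2 + σ)) ≤
        C * (1 + ‖y‖) ^ (-((N : ℝ) - 2)) := by
  have hN' : (3 : ℝ) ≤ N := mod_cast hN
  have ⟨C, hC, h⟩ := kernel_convolution_estimate_large_general
    (volume : Measure (EuclideanSpace ℝ (Fin N))) (a := N - 2) (b := 2 + σ) (by linarith)
    (by simp) (by rw [finrank_euclideanSpace_fin]; linarith)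
  exact ⟨C, hC, fun y ↦ (h y).2⟩
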